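/- Let p₁, …, p_{2r} (r ≥ 1) be distinct prime numbers and let d = p₁⋯p_{2r}. Let p be a prime number with p ∤ d, p ≡ 5 (mod 8), and such that p is a quadratic non-residue modulo p_i for every odd p_i dividing d. Then: for every prime number q, the quaternion algebra ℍ[ℚ_q, p, d] is a division ring if and only if q divides d, and likewise ℍ[ℚ_q, p, −d] is a division ring if and only if q divides d; moreover neither ℍ[ℝ, p, d] nor ℍ[ℝ, p, −d] is a division ring. (Hence ℍ[ℚ,p,d] ≅ ℍ[ℚ,p,−d] is the indefinite rational quaternion algebra with discriminant d.) -/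

import Mathlib

open Quaternion

/-- A ring is a division ring if it is nontrivial and every nonzero element is invertible. -/
def IsDivisionRingPred (A : Type*) [Ring A] : Prop :=
  (1 : A) ≠ 0 ∧ ∀ x : A, x ≠ 0 → IsUnit x

/-!
The algebra `ℍ[K,a,b]` is a division ring exactly when `z ^ 2 = a * x ^ 2 + b * y ^ 2` has no
solution with `(x, y) ≠ 0`, which is decided one completion at a time. Over `ℝ` the parameter `p` is
a square. At an odd prime `q ∤ p * d` solutions modulo `q` exist by counting and lift by Hensel's
lemma; at `q = 2 ∤ d` one of `p` and `p + 4 * (± d)` is `1` modulo `8`, hence a square. At a prime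
`q ∣ d` the extension `ℚ_[q](√p)` is unramified of degree two, so the values of
`z ^ 2 - p * x ^ 2` have even valuation, whereas `± d` has odd valuation. At `q = p` quadratic
reciprocity makes each prime divisor of `d` a non-residue modulo `p`; as their number is even and
`-1` is a residue, `± d` is a square in `ℚ_[p]`.
-/

section QuaternionAlgebra

/-- The reduced norm of the quaternion algebra `ℍ[R,a,b]`, whose values decide invertibility. It is
encoded as the real part of `u * star u`, which lies in `R`. -/
def reducedNorm {R : Type*} [CommRing R] (a b : R) : ℍ[R,a,b] →* R where
  toFun u := (u * star u).re
  map_one' := by simp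
  map_mul' u v := by
    simp only [QuaternionAlgebra.re_mul, QuaternionAlgebra.imI_mul, QuaternionAlgebra.imJ_mul,
      QuaternionAlgebra.imK_mul, QuaternionAlgebra.re_star, QuaternionAlgebra.imI_star,
      QuaternionAlgebra.imJ_star, QuaternionAlgebra.imK_star]
    ring

theorem reducedNorm_apply {R : Type*} [CommRing R] {a b : R} (u : ℍ[R,a,b]) :
    reducedNorm a b u = u.re ^ 2 - a * u.imI ^ 2 - b * (u.imJ ^ 2 - a * u.imK ^ 2) := by
  simp only [reducedNorm, MonoidHom.coe_mk, OneHom.coe_mk, QuaternionAlgebra.re_mul,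
    QuaternionAlgebra.re_star, QuaternionAlgebra.imI_star, QuaternionAlgebra.imJ_star,
    QuaternionAlgebra.imK_star]
  ring

theorem mul_star_eq_reducedNorm {R : Type*} [CommRing R] {a b : R} (u : ℍ[R,a,b]) :
    u * star u = (reducedNorm a b u : ℍ[R,a,b]) :=
  u.mul_star_eq_coe

theorem isUnit_iff_isUnit_reducedNorm {R : Type*} [CommRing R] {a b : R} {u : ℍ[R,a,b]} :
    IsUnit u ↔ IsUnit (reducedNorm a b u) := by
  refine ⟨fun h ↦ h.map _, fun h ↦ ?_⟩
  have hu : IsUnit (u * star u) := by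
    rw [mul_star_eq_reducedNorm]
    exact h.map (algebraMap R ℍ[R,a,b])
  exact ((show Commute u (star u) from (star_comm_self' u).symm).isUnit_mul_iff.1 hu).1

variable {K : Type*} [Field K] {a b : K}

theorem isDivisionRingPred_iff_reducedNorm_anisotropic :
    IsDivisionRingPred ℍ[K,a,b] ↔ ∀ u : ℍ[K,a,b], reducedNorm a b u = 0 → u = 0 := by
  simp only [IsDivisionRingPred, ne_eq, one_ne_zero, not_false_eq_true, true_and,
    isUnit_iff_isUnit_reducedNorm, isUnit_iff_ne_zero, not_imp_not]

/-- The Hilbert symbol criterion. If `x ^ 2 - a * y ^ 2 = b * n` with `n = z ^ 2 - a * w ^ 2 ≠ 0`,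
multiplying by `n` and using multiplicativity of the norm form of `K(√a)` represents `b * n ^ 2` by
that form. -/
theorem isDivisionRingPred_iff_forall_isSquare :
    IsDivisionRingPred ℍ[K,a,b] ↔
      ∀ x y : K, IsSquare (a * x ^ 2 + b * y ^ 2) → x = 0 ∧ y = 0 := by
  rw [isDivisionRingPred_iff_reducedNorm_anisotropic]
  constructor
  · rintro h x y ⟨z, hz⟩
    have hu := h ⟨z, x, y, 0⟩ (by rw [reducedNorm_apply]; linear_combination -hz)
    exact ⟨congrArg QuaternionAlgebra.imI hu, congrArg QuaternionAlgebra.imJ hu⟩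
  · rintro h ⟨x, y, z, w⟩ hu
    replace hu : x ^ 2 - a * y ^ 2 - b * (z ^ 2 - a * w ^ 2) = 0 := by
      rwa [reducedNorm_apply] at hu
    have norm_eq_zero (s t : K) (hst : s ^ 2 - a * t ^ 2 = 0) : s = 0 ∧ t = 0 := by
      obtain ⟨rfl, -⟩ := h t 0 ⟨s, by linear_combination -hst⟩
      exact ⟨by simpa using hst, rfl⟩
    have hn : z ^ 2 - a * w ^ 2 = 0 :=
      (h (x * w + y * z) (z ^ 2 - a * w ^ 2)
        ⟨x * z + a * y * w, by linear_combination -(z ^ 2 - a * w ^ 2) * hu⟩).2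
    obtain ⟨rfl, rfl⟩ := norm_eq_zero z w hn
    obtain ⟨rfl, rfl⟩ := norm_eq_zero x y (by simpa using hu)
    rfl

theorem not_isDivisionRingPred_of_isSquare_add {x y : K} (hxy : x ≠ 0 ∨ y ≠ 0)
    (h : IsSquare (a * x ^ 2 + b * y ^ 2)) : ¬ IsDivisionRingPred ℍ[K,a,b] := fun hdiv ↦ by
  obtain ⟨hx, hy⟩ := isDivisionRingPred_iff_forall_isSquare.1 hdiv x y h
  exact hxy.elim (· hx) (· hy)

theorem not_isDivisionRingPred_of_isSquare_left (ha : IsSquare a) :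
    ¬ IsDivisionRingPred ℍ[K,a,b] :=
  not_isDivisionRingPred_of_isSquare_add (x := 1) (y := 0) (by simp) (by simpa using ha)

theorem not_isDivisionRingPred_of_isSquare_right (hb : IsSquare b) :
    ¬ IsDivisionRingPred ℍ[K,a,b] :=
  not_isDivisionRingPred_of_isSquare_add (x := 0) (y := 1) (by simp) (by simpa using hb)

theorem isDivisionRingPred_of_not_isSquare_map {M : Type*} [CommGroupWithZero M] (v : K →*₀ M)
    (ha : ¬ IsSquare a) (hv : ∀ x y : K, IsSquare (v (x ^ 2 - a * y ^ 2)))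
    (hb : ¬ IsSquare (v b)) : IsDivisionRingPred ℍ[K,a,b] := by
  rw [isDivisionRingPred_iff_forall_isSquare]
  rintro x y ⟨z, hz⟩
  have hy : y = 0 := by
    by_contra hy
    have hb_eq : b = (z ^ 2 - a * x ^ 2) / y ^ 2 := by
      field_simp
      linear_combination hz
    apply hb
    rw [hb_eq, map_div₀, map_pow]
    exact (hv z x).div (IsSquare.sq _)
  refine ⟨?_, hy⟩
  by_contra hx
  refine ha ⟨z / x, ?_⟩
  rw [hy] at hz
  field_simp
  linear_combination hz

end QuaternionAlgebra

section Valuation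

variable {K Γ₀ : Type*} [Field K] [LinearOrderedCommGroupWithZero Γ₀]

theorem isSquare_valuation_sq_sub_mul_sq (v : Valuation K Γ₀) {a : K} (ha : v a ≤ 1)
    (h : ∀ t, v t ≤ 1 → IsSquare (v (t ^ 2 - a))) (x y : K) :
    IsSquare (v (x ^ 2 - a * y ^ 2)) := by
  rcases eq_or_ne y 0 with rfl | hy
  · simpa using IsSquare.sq (v x)
  have hfactor : x ^ 2 - a * y ^ 2 = ((x / y) ^ 2 - a) * y ^ 2 := by field_simp
  rw [hfactor, map_mul, map_pow]
  refine IsSquare.mul ?_ (IsSquare.sq _)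
  rcases le_or_gt (v (x / y)) 1 with ht | ht
  · exact h _ ht
  · have hlt : v a < v ((x / y) ^ 2) := by
      rw [map_pow]
      exact ha.trans_lt (one_lt_pow₀ ht two_ne_zero)
    rw [v.map_sub_eq_of_lt_left hlt, map_pow]
    exact IsSquare.sq _

theorem isDivisionRingPred_of_not_isSquare_valuation (v : Valuation K Γ₀) {a b : K} (ha : v a ≤ 1)
    (h : ∀ t, v t ≤ 1 → t ^ 2 ≠ a ∧ IsSquare (v (t ^ 2 - a))) (hb : ¬ IsSquare (v b)) :
    IsDivisionRingPred ℍ[K,a,b] := by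
  refine isDivisionRingPred_of_not_isSquare_map v.toMonoidWithZeroHom ?_
    (isSquare_valuation_sq_sub_mul_sq v ha fun t ht ↦ (h t ht).2) hb
  rintro ⟨t, rfl⟩
  rw [← sq, map_pow] at ha
  exact (h t ((pow_le_one_iff_of_nonneg zero_le two_ne_zero).1 ha)).1 (sq t)

end Valuation

section Henselian

variable {R : Type*} [CommRing R]

/-- Substituting `1 + 2 * y` for the square root turns the equation into `y ^ 2 + y = t`, which has
the simple root `0` modulo `I`, whether or not `2` is invertible. -/
theorem isSquare_one_add_four_mul {I : Ideal R} [HenselianRing R I] {t : R} (ht : t ∈ I) :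
    IsSquare (1 + 4 * t) := by
  have hmonic : (Polynomial.X ^ 2 + (Polynomial.X - Polynomial.C t)).Monic :=
    Polynomial.monic_X_pow_add ((Polynomial.degree_X_sub_C_le t).trans_lt (by norm_num))
  obtain ⟨y, hy, -⟩ := HenselianRing.is_henselian (I := I) _ hmonic 0 (by simpa using ht) (by simp)
  have hy' : y ^ 2 + (y - t) = 0 := by simpa using hy
  exact ⟨1 + 2 * y, by linear_combination -4 * hy'⟩

theorem isSquare_of_sub_sq_mem {I : Ideal R} [HenselianRing R I] {u x : R} (hx : IsUnit (2 * x))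
    (h : u - x ^ 2 ∈ I) : IsSquare u := by
  obtain ⟨y, hy⟩ := hx.exists_right_inv
  have hu : u = x ^ 2 * (1 + 4 * (y ^ 2 * (u - x ^ 2))) := by
    linear_combination -(u - x ^ 2) * (2 * x * y + 1) * hy
  rw [hu]
  exact (IsSquare.sq x).mul (isSquare_one_add_four_mul (I.mul_mem_left _ h))

end Henselian

section FiniteField

variable {F : Type*} [Field F] [Finite F]

theorem exists_mul_sq_add_mul_sq_eq {a b : F} (ha : a ≠ 0) (hb : b ≠ 0) (c : F) :
    ∃ x y : F, a * x ^ 2 + b * y ^ 2 = c := by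
  have := Fintype.ofFinite F
  by_cases hF : ringChar F = 2
  · obtain ⟨s, hs⟩ := FiniteField.isSquare_of_char_two hF (c / a)
    exact ⟨s, 0, by rw [sq, ← hs]; field_simp; ring⟩
  · obtain ⟨x, y, hxy⟩ := FiniteField.exists_root_sum_quadratic
      (Polynomial.degree_quadratic (b := 0) (c := -c) ha)
      (Polynomial.degree_quadratic (b := 0) (c := 0) hb)
      (FiniteField.odd_card_of_char_ne_two hF)
    refine ⟨x, y, ?_⟩
    simp only [map_zero, zero_mul, add_zero, map_neg, Polynomial.eval_add, Polynomial.eval_mul,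
      Polynomial.eval_C, Polynomial.eval_pow, Polynomial.eval_X, Polynomial.eval_neg] at hxy
    linear_combination hxy

theorem isSquare_prod_of_even_card {ι : Type*} {s : Finset ι} {f : ι → F} (hs : Even s.card)
    (hf : ∀ i ∈ s, ¬ IsSquare (f i)) : IsSquare (∏ i ∈ s, f i) := by
  classical
  have := Fintype.ofFinite F
  have hchar : quadraticChar F (∏ i ∈ s, f i) = 1 := by
    rw [map_prod, Finset.prod_congr rfl fun i hi ↦
      quadraticChar_neg_one_iff_not_isSquare.2 (hf i hi), Finset.prod_const, hs.neg_one_pow]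
  by_contra hprod
  rw [← quadraticChar_neg_one_iff_not_isSquare, hchar] at hprod
  norm_num at hprod

end FiniteField

section PadicInt

variable {q : ℕ} [Fact q.Prime]

theorem toZMod_eq_zero_iff_dvd {x : ℤ_[q]} : PadicInt.toZMod x = 0 ↔ (q : ℤ_[q]) ∣ x := by
  rw [← RingHom.mem_ker, PadicInt.ker_toZMod, PadicInt.maximalIdeal_eq_span_p,
    Ideal.mem_span_singleton]

theorem isUnit_iff_toZMod_ne_zero {x : ℤ_[q]} : IsUnit x ↔ PadicInt.toZMod x ≠ 0 := by
  rw [Ne, ← RingHom.mem_ker, PadicInt.ker_toZMod, IsLocalRing.mem_maximalIdeal, mem_nonunits_iff,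
    not_not]

theorem isUnit_intCast_iff_not_dvd {n : ℤ} : IsUnit (n : ℤ_[q]) ↔ ¬ (q : ℤ) ∣ n := by
  rw [isUnit_iff_toZMod_ne_zero, map_intCast, Ne, ZMod.intCast_zmod_eq_zero_iff_dvd]

theorem isSquare_of_isSquare_toZMod (hq : q ≠ 2) {u : ℤ_[q]} (hu : IsUnit u)
    (h : IsSquare (PadicInt.toZMod u)) : IsSquare u := by
  obtain ⟨c, hc⟩ := h
  obtain ⟨x, rfl⟩ := ZMod.ringHom_surjective (PadicInt.toZMod (p := q)) c
  have hx : IsUnit x := by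
    rw [isUnit_iff_toZMod_ne_zero] at hu ⊢
    exact left_ne_zero_of_mul (hc ▸ hu)
  have htwo : IsUnit (2 : ℤ_[q]) := by
    rw [isUnit_iff_toZMod_ne_zero, map_ofNat]
    exact Ring.two_ne_zero (by rwa [ZMod.ringChar_zmod_n])
  apply isSquare_of_sub_sq_mem (I := IsLocalRing.maximalIdeal ℤ_[q]) (htwo.mul hx)
  rw [← PadicInt.ker_toZMod, RingHom.mem_ker, map_sub, map_pow, hc, sq, sub_self]

theorem two_dvd_sub_one_of_isUnit {x : ℤ_[2]} (hx : IsUnit x) : 2 ∣ x - 1 := by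
  have hone : ∀ z : ZMod 2, z ≠ 0 → z - 1 = 0 := by decide
  refine toZMod_eq_zero_iff_dvd.1 ?_
  rw [map_sub, map_one]
  exact hone _ (isUnit_iff_toZMod_ne_zero.1 hx)

theorem isSquare_of_eight_dvd_sub_one {u : ℤ_[2]} (hu : 8 ∣ u - 1) : IsSquare u := by
  obtain ⟨t, ht⟩ := hu
  have hu_eq : u = 1 + 4 * (2 * t) := by linear_combination ht
  rw [hu_eq]
  apply isSquare_one_add_four_mul (I := IsLocalRing.maximalIdeal ℤ_[2])
  rw [PadicInt.maximalIdeal_eq_span_p]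
  exact Ideal.mem_span_singleton.2 ⟨t, rfl⟩

end PadicInt

section PadicSplit

variable {q : ℕ} [Fact q.Prime]

theorem not_isDivisionRingPred_padic_of_isSquare_add {a b x y : ℤ_[q]} (hxy : x ≠ 0 ∨ y ≠ 0)
    (h : IsSquare (a * x ^ 2 + b * y ^ 2)) :
    ¬ IsDivisionRingPred ℍ[ℚ_[q],(a : ℚ_[q]),(b : ℚ_[q])] := by
  refine not_isDivisionRingPred_of_isSquare_add (x := x) (y := y) (by simpa using hxy) ?_
  simpa using h.map (algebraMap ℤ_[q] ℚ_[q])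

theorem not_isDivisionRingPred_padic_of_isUnit (hq : q ≠ 2) {a b : ℤ_[q]} (ha : IsUnit a)
    (hb : IsUnit b) : ¬ IsDivisionRingPred ℍ[ℚ_[q],(a : ℚ_[q]),(b : ℚ_[q])] := by
  obtain ⟨x₀, y₀, hxy⟩ := exists_mul_sq_add_mul_sq_eq (isUnit_iff_toZMod_ne_zero.1 ha)
    (isUnit_iff_toZMod_ne_zero.1 hb) 1
  obtain ⟨x, rfl⟩ := ZMod.ringHom_surjective (PadicInt.toZMod (p := q)) x₀
  obtain ⟨y, rfl⟩ := ZMod.ringHom_surjective (PadicInt.toZMod (p := q)) y₀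
  have hone : PadicInt.toZMod (a * x ^ 2 + b * y ^ 2) = 1 := by
    simpa only [map_add, map_mul, map_pow] using hxy
  refine not_isDivisionRingPred_padic_of_isSquare_add (x := x) (y := y) ?_
    (isSquare_of_isSquare_toZMod hq (isUnit_iff_toZMod_ne_zero.2 ?_) ?_)
  · by_contra! h0
    simp [h0.1, h0.2] at hone
  · rw [hone]
    exact one_ne_zero
  · rw [hone]
    exact IsSquare.one

theorem not_isDivisionRingPred_padic_two {a b : ℤ_[2]} (ha : 4 ∣ a - 1) (hb : IsUnit b) :
    ¬ IsDivisionRingPred ℍ[ℚ_[2],(a : ℚ_[2]),(b : ℚ_[2])] := by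
  obtain ⟨m, hm⟩ := ha
  obtain ⟨n, hn⟩ := two_dvd_sub_one_of_isUnit hb
  by_cases hmu : IsUnit m
  · obtain ⟨k, hk⟩ := two_dvd_sub_one_of_isUnit hmu
    refine not_isDivisionRingPred_padic_of_isSquare_add (x := 1) (y := 2) (by simp)
      (isSquare_of_eight_dvd_sub_one ⟨k + n + 1, ?_⟩)
    linear_combination hm + 4 * hk + 4 * hn
  · rw [isUnit_iff_toZMod_ne_zero, not_not, toZMod_eq_zero_iff_dvd] at hmu
    obtain ⟨k, hk⟩ := hmu
    refine not_isDivisionRingPred_padic_of_isSquare_add (x := 1) (y := 0) (by simp)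
      (isSquare_of_eight_dvd_sub_one ⟨k, ?_⟩)
    push_cast at hk
    linear_combination hm + 4 * hk

end PadicSplit

section PadicRamified

variable {q : ℕ} [Fact q.Prime]

theorem mulValuation_of_ne_zero {x : ℚ_[q]} (hx : x ≠ 0) :
    Padic.mulValuation x = WithZero.exp (-x.valuation) :=
  if_neg hx

theorem isSquare_mulValuation_iff {x : ℚ_[q]} (hx : x ≠ 0) :
    IsSquare (Padic.mulValuation x) ↔ Even x.valuation := by
  rw [mulValuation_of_ne_zero hx]
  constructor
  · rintro ⟨y, hy⟩
    have hy0 : y ≠ 0 := by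
      rintro rfl
      simp at hy
    rw [← WithZero.exp_log hy0, ← WithZero.exp_add, WithZero.exp_inj] at hy
    exact even_neg.1 ⟨_, hy⟩
  · rintro ⟨n, hn⟩
    exact ⟨WithZero.exp (-n), by rw [← WithZero.exp_add, WithZero.exp_inj, hn, neg_add]⟩

theorem mulValuation_le_one_iff {x : ℚ_[q]} : Padic.mulValuation x ≤ 1 ↔ ‖x‖ ≤ 1 := by
  rcases eq_or_ne x 0 with rfl | hx
  · simp
  · rw [Padic.norm_le_one_iff_val_nonneg, mulValuation_of_ne_zero hx, ← WithZero.exp_zero,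
      WithZero.exp_le_exp, neg_nonpos]

theorem mulValuation_eq_one_of_isUnit {u : ℤ_[q]} (hu : IsUnit u) :
    Padic.mulValuation (u : ℚ_[q]) = 1 :=
  Valuation.Integers.one_of_isUnit' hu fun x ↦ mulValuation_le_one_iff.2 x.2

theorem isDivisionRingPred_padic_of_odd_valuation {a : ℤ_[q]} {b : ℚ_[q]} (hb : Odd b.valuation)
    (ha : ∀ t : ℤ_[q], ∃ u c : ℤ_[q], IsUnit u ∧ c ≠ 0 ∧ t ^ 2 - a = u * c ^ 2) :
    IsDivisionRingPred ℍ[ℚ_[q],(a : ℚ_[q]),b] := by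
  have hb0 : b ≠ 0 := by
    rintro rfl
    simp at hb
  refine isDivisionRingPred_of_not_isSquare_valuation Padic.mulValuation
    (mulValuation_le_one_iff.2 a.2) (fun t ht ↦ ?_) ?_
  · obtain ⟨t, rfl⟩ : ∃ s : ℤ_[q], (s : ℚ_[q]) = t := ⟨⟨t, mulValuation_le_one_iff.1 ht⟩, rfl⟩
    obtain ⟨u, c, hu, hc, htuc⟩ := ha t
    refine ⟨fun hta ↦ ?_, ?_⟩
    · have hta' : t ^ 2 = a := PadicInt.ext (by simpa using hta)
      rw [hta', sub_self] at htuc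
      exact mul_ne_zero hu.ne_zero (pow_ne_zero 2 hc) htuc.symm
    · have htuc' : (t : ℚ_[q]) ^ 2 - a = u * (c : ℚ_[q]) ^ 2 := by
        simpa using congrArg ((↑) : ℤ_[q] → ℚ_[q]) htuc
      rw [htuc', map_mul, mulValuation_eq_one_of_isUnit hu, one_mul, map_pow]
      exact IsSquare.sq _
  · rwa [isSquare_mulValuation_iff hb0, Int.not_even_iff_odd]

theorem isUnit_sq_sub_of_not_isSquare_toZMod {a : ℤ_[q]} (ha : ¬ IsSquare (PadicInt.toZMod a))
    (t : ℤ_[q]) : IsUnit (t ^ 2 - a) := by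
  rw [isUnit_iff_toZMod_ne_zero, map_sub, map_pow, sub_ne_zero]
  exact fun h ↦ ha (h ▸ IsSquare.sq _)

/-- For a unit `t = 1 + 2 * s` and `a = 5 + 8 * k`, the identity
`t ^ 2 - a = 4 * (s * (s + 1) - (1 + 2 * k))` exhibits four times a unit. -/
theorem exists_sq_sub_eq_isUnit_mul_sq {a : ℤ_[2]} (ha : 8 ∣ a - 5) (t : ℤ_[2]) :
    ∃ u c : ℤ_[2], IsUnit u ∧ c ≠ 0 ∧ t ^ 2 - a = u * c ^ 2 := by
  obtain ⟨k, hk⟩ := ha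
  have htwo : PadicInt.toZMod (2 : ℤ_[2]) = 0 := toZMod_eq_zero_iff_dvd.2 dvd_rfl
  by_cases ht : IsUnit t
  · obtain ⟨s, hs⟩ := two_dvd_sub_one_of_isUnit ht
    refine ⟨s * (s + 1) - (1 + 2 * k), 2, ?_, two_ne_zero, ?_⟩
    · have hodd : ∀ z : ZMod 2, z * (z + 1) - 1 ≠ 0 := by decide
      rw [isUnit_iff_toZMod_ne_zero]
      simpa [htwo] using hodd (PadicInt.toZMod s)
    · linear_combination (t + 1 + 2 * s) * hs - hk
  · refine ⟨t ^ 2 - a, 1, ?_, one_ne_zero, by ring⟩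
    have ha_eq : a = 2 * (2 + 4 * k) + 1 := by linear_combination hk
    rw [isUnit_iff_toZMod_ne_zero, not_not] at ht
    rw [isUnit_iff_toZMod_ne_zero, ha_eq]
    simp [ht, htwo]

end PadicRamified

theorem odd_valuation_intCast_of_squarefree {q : ℕ} [Fact q.Prime] {D : ℤ} (hD : Squarefree D)
    (hqD : (q : ℤ) ∣ D) : Odd (D : ℚ_[q]).valuation := by
  rw [← Int.squarefree_natAbs] at hD
  rw [Padic.valuation_intCast, padicValInt, ← Nat.factorization_def _ (Fact.out : q.Prime),
    Nat.factorization_eq_one_of_squarefree hD Fact.out (Int.natCast_dvd.1 hqD)]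
  exact odd_one

theorem isDivisionRingPred_padic_iff_dvd {q : ℕ} [Fact q.Prime] {p D : ℤ} (hp : p % 8 = 5)
    (hD : Squarefree D) (hres : (q : ℤ) ∣ p → IsSquare (D : ZMod q))
    (hnonres : (q : ℤ) ∣ D → q ≠ 2 → ¬ IsSquare (p : ZMod q)) :
    IsDivisionRingPred ℍ[ℚ_[q],(p : ℚ_[q]),(D : ℚ_[q])] ↔ (q : ℤ) ∣ D := by
  rw [← PadicInt.coe_intCast p]
  refine ⟨fun hdiv ↦ ?_, fun hqD ↦ ?_⟩
  · by_contra hqD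
    have hDu : IsUnit (D : ℤ_[q]) := isUnit_intCast_iff_not_dvd.2 hqD
    revert hdiv
    rw [← PadicInt.coe_intCast D]
    rcases eq_or_ne q 2 with rfl | hq
    · exact not_isDivisionRingPred_padic_two
        (by simpa using map_dvd (Int.castRingHom ℤ_[2]) (show 4 ∣ p - 1 by lia)) hDu
    by_cases hqp : (q : ℤ) ∣ p
    · have hDsq : IsSquare (D : ℤ_[q]) :=
        isSquare_of_isSquare_toZMod hq hDu (by simpa using hres hqp)
      exact not_isDivisionRingPred_of_isSquare_right (hDsq.map (algebraMap ℤ_[q] ℚ_[q]))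
    · exact not_isDivisionRingPred_padic_of_isUnit hq (isUnit_intCast_iff_not_dvd.2 hqp) hDu
  · apply isDivisionRingPred_padic_of_odd_valuation (odd_valuation_intCast_of_squarefree hD hqD)
    intro t
    rcases eq_or_ne q 2 with rfl | hq
    · exact exists_sq_sub_eq_isUnit_mul_sq
        (by simpa using map_dvd (Int.castRingHom ℤ_[2]) (show 8 ∣ p - 5 by lia)) t
    · exact ⟨t ^ 2 - p, 1, isUnit_sq_sub_of_not_isSquare_toZMod (by simpa using hnonres hqD hq) t,
        one_ne_zero, by ring⟩

theorem not_isSquare_natCast_of_mod_eight_eq_five {p l : ℕ} [Fact p.Prime] (hl : l.Prime)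
    (hp : p % 8 = 5) (h : Odd l → ¬ IsSquare (p : ZMod l)) : ¬ IsSquare (l : ZMod p) := by
  rcases hl.eq_two_or_odd' with rfl | hodd
  · rw [Nat.cast_ofNat, ZMod.exists_sq_eq_two_iff (by lia)]
    lia
  · have := Fact.mk hl
    rw [ZMod.exists_sq_eq_prime_iff_of_mod_four_eq_one (by lia)
      fun hl2 ↦ absurd (hl2 ▸ hodd) (by decide)]
    exact h hodd

theorem isSquare_intCast_of_isSquare_natAbs {R : Type*} [CommRing R] {n : ℤ}
    (hneg : IsSquare (-1 : R)) (hn : IsSquare (n.natAbs : R)) : IsSquare (n : R) := by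
  rcases Int.natAbs_eq n with h | h <;> rw [h]
  · simpa using hn
  · simpa using hneg.mul hn

theorem squarefree_prod_of_injective_prime {ι : Type*} [Fintype ι] {f : ι → ℕ}
    (hf : ∀ i, (f i).Prime) (hinj : Function.Injective f) : Squarefree (∏ i, f i) := by
  refine Finset.squarefree_prod_of_pairwise_isCoprime (fun i _ j _ hij ↦ ?_)
    fun i _ ↦ (hf i).prime.squarefree
  exact Nat.coprime_iff_isRelPrime.1 ((Nat.coprime_primes (hf i) (hf j)).2 (hinj.ne hij))

theorem stmt_7 (r : ℕ) (hr : 1 ≤ r) (ps : Fin (2 * r) → ℕ)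
    (hps : ∀ i, (ps i).Prime) (hinj : Function.Injective ps)
    (d : ℕ) (hd : d = ∏ i, ps i)
    (p : ℕ) (hp : p.Prime) (hpd : ¬ p ∣ d) (hp8 : p % 8 = 5)
    (hnr : ∀ i, Odd (ps i) → ¬ IsSquare (p : ZMod (ps i))) :
    (∀ (q : ℕ) [Fact q.Prime],
      (IsDivisionRingPred ℍ[ℚ_[q], (p : ℚ_[q]), (d : ℚ_[q])] ↔ q ∣ d) ∧
      (IsDivisionRingPred ℍ[ℚ_[q], (p : ℚ_[q]), -(d : ℚ_[q])] ↔ q ∣ d)) ∧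
    ¬ IsDivisionRingPred ℍ[ℝ, (p : ℝ), (d : ℝ)] ∧
    ¬ IsDivisionRingPred ℍ[ℝ, (p : ℝ), -(d : ℝ)] := by
  have := Fact.mk hp
  have hdsf : Squarefree d := hd ▸ squarefree_prod_of_injective_prime hps hinj
  have hdp : IsSquare (d : ZMod p) := by
    rw [hd, Nat.cast_prod]
    exact isSquare_prod_of_even_card (by simp) fun i _ ↦
      not_isSquare_natCast_of_mod_eight_eq_five (hps i) hp8 (hnr i)
  have hneg : IsSquare (-1 : ZMod p) := ZMod.exists_sq_eq_neg_one_iff.2 (by lia)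
  have hlocal (q : ℕ) [hq : Fact q.Prime] (D : ℤ) {b : ℚ_[q]} (hD : D.natAbs = d) (hb : D = b) :
      IsDivisionRingPred ℍ[ℚ_[q],(p : ℚ_[q]),b] ↔ q ∣ d := by
    rw [← hb, ← hD, ← Int.natCast_dvd, ← Int.cast_natCast p]
    refine isDivisionRingPred_padic_iff_dvd (by lia) (Int.squarefree_natAbs.1 (hD ▸ hdsf))
      (fun hqp ↦ ?_) fun hqD hq2 ↦ ?_
    · obtain rfl := (Nat.prime_dvd_prime_iff_eq hq.out hp).1 (Int.natCast_dvd_natCast.1 hqp)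
      exact isSquare_intCast_of_isSquare_natAbs hneg (hD ▸ hdp)
    · obtain ⟨i, -, hi⟩ := hq.out.prime.exists_mem_finset_dvd (hd ▸ hD ▸ Int.natCast_dvd.1 hqD)
      obtain rfl := (Nat.prime_dvd_prime_iff_eq hq.out (hps i)).1 hi
      simpa using hnr i (hq.out.odd_of_ne_two hq2)
  have hpR : IsSquare (p : ℝ) := Real.isSquare_iff.2 p.cast_nonneg
  exact ⟨fun q _ ↦ ⟨hlocal q d (by simp) (by simp), hlocal q (-d) (by simp) (by simp)⟩,
    not_isDivisionRingPred_of_isSquare_left hpR, not_isDivisionRingPred_of_isSquare_left hpR⟩
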